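/- Let m be a natural number with m ≥ 1. Then ∫_ℝ 1/((x−i)^{m+3}·(x+i)^m) dx = −2πi·4^{−(m+1)}·C(2m+1, m+2), where 4^{−(m+1)} denotes the integer power of 4 with exponent −(m+1). -/

import Mathlib

open MeasureTheory Complex

/-!
Let `0 < Im z` and `Im w < 0`. Since `1 / (x - w) - 1 / (x - z) = (w - z) / ((x - z) * (x - w))`,
the integrals `J a b = ∫ ((x - z) ^ a * (x - w) ^ b)⁻¹` satisfy
`(z - w) * J (a + 1) (b + 1) = J (a + 1) b - J a (b + 1)`, so a closed form follows by Pascal's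
rule. When only one pole of order at least two is left, the integrand has a rational primitive
vanishing at `±∞`, so its integral is zero. The constant `2πi` comes from `J 1 1`, whose integrand
has primitive `(log (x - z) - log (x - w)) / (z - w)`: the two principal logarithms agree in the
limit at `+∞`, while at `-∞` they approach opposite sides of the branch cut. The theorem is the
case `z = i`, `w = -i`.
-/

open Filter Topology Asymptotics

lemma hasDerivAt_ofReal_sub (z : ℂ) (x : ℝ) : HasDerivAt (fun t : ℝ ↦ (t : ℂ) - z) 1 x :=
  (hasDerivAt_id x).ofReal_comp.sub_const z

lemma tendsto_inv_ofReal_sub_cocompact (z : ℂ) :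
    Tendsto (fun x : ℝ ↦ ((x : ℂ) - z)⁻¹) (cocompact ℝ) (𝓝 0) := by
  rw [← Metric.cobounded_eq_cocompact]
  exact tendsto_inv₀_cobounded.comp
    ((tendsto_sub_const_cobounded z).comp (RCLike.tendsto_ofReal_cobounded_cobounded ℂ))

section NonrealPoles

variable {z w : ℂ}

lemma ofReal_sub_ne_zero_of_im_ne_zero (hz : z.im ≠ 0) (x : ℝ) : (x : ℂ) - z ≠ 0 :=
  sub_ne_zero.2 fun h ↦ hz (by simp [← h])

lemma isBigO_top_inv_ofReal_sub (hz : z.im ≠ 0) :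
    (fun x : ℝ ↦ ((x : ℂ) - z)⁻¹) =O[⊤] fun x : ℝ ↦ (1 + ‖x‖)⁻¹ := by
  refine isBigO_top.2 ⟨(1 + ‖z‖) / |z.im| + 1, fun x ↦ ?_⟩
  have him_pos : 0 < |z.im| := abs_pos.2 hz
  have him : |z.im| ≤ ‖(x : ℂ) - z‖ := by simpa using abs_im_le_norm ((x : ℂ) - z)
  have hx : ‖x‖ ≤ ‖(x : ℂ) - z‖ + ‖z‖ := by simpa using norm_add_le ((x : ℂ) - z) z
  have hbound : 1 + ‖x‖ ≤ ((1 + ‖z‖) / |z.im| + 1) * ‖(x : ℂ) - z‖ :=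
    calc 1 + ‖x‖ ≤ (1 + ‖z‖) / |z.im| * |z.im| + ‖(x : ℂ) - z‖ := by
          rw [div_mul_cancel₀ _ him_pos.ne']; linarith
      _ ≤ (1 + ‖z‖) / |z.im| * ‖(x : ℂ) - z‖ + ‖(x : ℂ) - z‖ := by gcongr
      _ = ((1 + ‖z‖) / |z.im| + 1) * ‖(x : ℂ) - z‖ := by ring
  rw [norm_inv, norm_inv, Real.norm_of_nonneg (by positivity : 0 ≤ 1 + ‖x‖), ← div_eq_mul_inv,
    inv_eq_one_div, div_le_div_iff₀ (him_pos.trans_le him) (by positivity), one_mul]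
  exact hbound

lemma integrable_inv_ofReal_sub_pow_mul_ofReal_sub_pow (hz : z.im ≠ 0) (hw : w.im ≠ 0) {a b : ℕ}
    (hab : 2 ≤ a + b) :
    Integrable fun x : ℝ ↦ (((x : ℂ) - z) ^ a * ((x : ℂ) - w) ^ b)⁻¹ := by
  have hcont : Continuous fun x : ℝ ↦ (((x : ℂ) - z) ^ a * ((x : ℂ) - w) ^ b)⁻¹ :=
    Continuous.inv₀ (by fun_prop) fun x ↦ mul_ne_zero
      (pow_ne_zero _ (ofReal_sub_ne_zero_of_im_ne_zero hz x))
      (pow_ne_zero _ (ofReal_sub_ne_zero_of_im_ne_zero hw x))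
  have hdecay : (fun x : ℝ ↦ (((x : ℂ) - z) ^ a * ((x : ℂ) - w) ^ b)⁻¹) =O[⊤]
      fun x : ℝ ↦ (1 + ‖x‖) ^ (-((a + b : ℕ) : ℝ)) := by
    refine (((isBigO_top_inv_ofReal_sub hz).pow a).mul
      ((isBigO_top_inv_ofReal_sub hw).pow b)).congr (fun x ↦ ?_) fun x ↦ ?_
    · rw [mul_inv, inv_pow, inv_pow]
    · rw [Real.rpow_neg (by positivity), Real.rpow_natCast, ← pow_add, inv_pow]
  refine hdecay.integrable hcont.aestronglyMeasurable (integrable_one_add_norm ?_)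
  rw [Module.finrank_self]
  exact_mod_cast hab

lemma integral_inv_ofReal_sub_pow_eq_zero (hz : z.im ≠ 0) {n : ℕ} (hn : 2 ≤ n) :
    ∫ x : ℝ, (((x : ℂ) - z) ^ n)⁻¹ = 0 := by
  obtain ⟨k, rfl⟩ := Nat.exists_eq_add_of_le' hn
  let F : ℝ → ℂ := fun x ↦ -((k : ℂ) + 1)⁻¹ * (((x : ℂ) - z) ^ (k + 1))⁻¹
  have hF (x : ℝ) : HasDerivAt F (((x : ℂ) - z) ^ (k + 2))⁻¹ x := by
    have hx := ofReal_sub_ne_zero_of_im_ne_zero hz x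
    have hk : (k : ℂ) + 1 ≠ 0 := k.cast_add_one_ne_zero
    refine ((((hasDerivAt_ofReal_sub z x).pow (k + 1)).inv (pow_ne_zero _ hx)).const_mul
      _).congr_deriv ?_
    push_cast [Pi.pow_apply, Nat.add_sub_cancel]
    field_simp
    ring
  have hF_lim : Tendsto F (cocompact ℝ) (𝓝 0) := by
    simpa only [F, inv_pow, zero_pow k.succ_ne_zero, mul_zero] using
      ((tendsto_inv_ofReal_sub_cocompact z).pow (k + 1)).const_mul (-((k : ℂ) + 1)⁻¹)
  have hintegrable : Integrable fun x : ℝ ↦ (((x : ℂ) - z) ^ (k + 2))⁻¹ := by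
    simpa using integrable_inv_ofReal_sub_pow_mul_ofReal_sub_pow hz hz (b := 0) hn
  simpa using integral_of_hasDerivAt_of_tendsto hF hintegrable
    (hF_lim.mono_left atBot_le_cocompact) (hF_lim.mono_left atTop_le_cocompact)

lemma integral_inv_ofReal_sub_pow_succ_mul_ofReal_sub_pow_succ (hz : z.im ≠ 0) (hw : w.im ≠ 0)
    (hzw : z ≠ w) {a b : ℕ} (hab : 1 ≤ a + b) :
    ∫ x : ℝ, (((x : ℂ) - z) ^ (a + 1) * ((x : ℂ) - w) ^ (b + 1))⁻¹ =
      ((∫ x : ℝ, (((x : ℂ) - z) ^ (a + 1) * ((x : ℂ) - w) ^ b)⁻¹) -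
        ∫ x : ℝ, (((x : ℂ) - z) ^ a * ((x : ℂ) - w) ^ (b + 1))⁻¹) / (z - w) := by
  rw [← integral_sub (integrable_inv_ofReal_sub_pow_mul_ofReal_sub_pow hz hw (by lia))
    (integrable_inv_ofReal_sub_pow_mul_ofReal_sub_pow hz hw (by lia)), ← integral_div]
  congr with x
  have hxz := ofReal_sub_ne_zero_of_im_ne_zero hz x
  have hxw := ofReal_sub_ne_zero_of_im_ne_zero hw x
  have hzw' := sub_ne_zero.2 hzw
  field_simp
  ring

lemma hasDerivAt_log_ofReal_sub (hz : z.im ≠ 0) (x : ℝ) :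
    HasDerivAt (fun t : ℝ ↦ log ((t : ℂ) - z)) ((x : ℂ) - z)⁻¹ x := by
  simpa using (hasDerivAt_ofReal_sub z x).clog_real (mem_slitPlane_iff.2 (.inr (by simpa using hz)))

end NonrealPoles

lemma tendsto_log_ofReal_sub_sub_log_atTop (z : ℂ) :
    Tendsto (fun x : ℝ ↦ log ((x : ℂ) - z) - Real.log x) atTop (𝓝 0) := by
  have hquot : Tendsto (fun x : ℝ ↦ 1 - z * (x : ℂ)⁻¹) atTop (𝓝 1) := by
    simpa using (((tendsto_inv_ofReal_sub_cocompact 0).mono_left atTop_le_cocompact).const_mul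
      z).const_sub 1
  have hlog : Tendsto (fun x : ℝ ↦ log (1 - z * (x : ℂ)⁻¹)) atTop (𝓝 0) := by
    simpa using hquot.clog one_mem_slitPlane
  refine hlog.congr' ?_
  filter_upwards [eventually_gt_atTop 0, hquot.eventually_ne one_ne_zero] with x hx hne
  have hx' : (x : ℂ) ≠ 0 := ofReal_ne_zero.2 hx.ne'
  rw [← add_sub_cancel_left (Real.log x : ℂ) (log (1 - z * (x : ℂ)⁻¹)), ← log_ofReal_mul hx hne]
  congr 2
  field_simp

lemma tendsto_log_ofReal_sub_sub_log_ofReal_sub_atTop (z w : ℂ) :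
    Tendsto (fun x : ℝ ↦ log ((x : ℂ) - z) - log ((x : ℂ) - w)) atTop (𝓝 0) := by
  simpa using (tendsto_log_ofReal_sub_sub_log_atTop z).sub (tendsto_log_ofReal_sub_sub_log_atTop w)

lemma log_neg_of_im_pos {u : ℂ} (hu : 0 < u.im) : log (-u) = log u - Real.pi * I := by
  simp only [log, norm_neg, arg_neg_eq_arg_sub_pi_of_im_pos hu]
  push_cast
  ring

lemma log_neg_of_im_neg {u : ℂ} (hu : u.im < 0) : log (-u) = log u + Real.pi * I := by
  simp only [log, norm_neg, arg_neg_eq_arg_add_pi_of_im_neg hu]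
  push_cast
  ring

section OppositeHalfPlanes

variable {z w : ℂ}

lemma tendsto_log_ofReal_sub_sub_log_ofReal_sub_atBot (hz : 0 < z.im) (hw : w.im < 0) :
    Tendsto (fun x : ℝ ↦ log ((x : ℂ) - z) - log ((x : ℂ) - w)) atBot
      (𝓝 (-(2 * Real.pi * I))) := by
  have hreflect := ((tendsto_log_ofReal_sub_sub_log_ofReal_sub_atTop (-z) (-w)).comp
    tendsto_neg_atBot_atTop).sub_const (2 * Real.pi * I)
  rw [zero_sub] at hreflect
  refine hreflect.congr fun x ↦ ?_
  have hlog_z : log ((x : ℂ) - z) = log (((-x : ℝ) : ℂ) - -z) - Real.pi * I := by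
    rw [← log_neg_of_im_pos (by simpa using hz)]
    push_cast
    ring_nf
  have hlog_w : log ((x : ℂ) - w) = log (((-x : ℝ) : ℂ) - -w) + Real.pi * I := by
    rw [← log_neg_of_im_neg (by simpa using hw)]
    push_cast
    ring_nf
  rw [Function.comp_apply, hlog_z, hlog_w]
  ring

lemma integral_inv_ofReal_sub_mul_ofReal_sub (hz : 0 < z.im) (hw : w.im < 0) :
    ∫ x : ℝ, (((x : ℂ) - z) * ((x : ℂ) - w))⁻¹ = 2 * Real.pi * I / (z - w) := by
  have hzw : z - w ≠ 0 := sub_ne_zero.2 fun h ↦ (hw.trans hz).ne' (congrArg im h)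
  have hderiv (x : ℝ) : HasDerivAt (fun t : ℝ ↦ log ((t : ℂ) - z) - log ((t : ℂ) - w))
      ((z - w) * (((x : ℂ) - z) * ((x : ℂ) - w))⁻¹) x := by
    have hxz := ofReal_sub_ne_zero_of_im_ne_zero hz.ne' x
    have hxw := ofReal_sub_ne_zero_of_im_ne_zero hw.ne x
    refine ((hasDerivAt_log_ofReal_sub hz.ne' x).sub
      (hasDerivAt_log_ofReal_sub hw.ne x)).congr_deriv ?_
    field_simp
    ring
  have hintegrable : Integrable fun x : ℝ ↦ (((x : ℂ) - z) * ((x : ℂ) - w))⁻¹ := by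
    simpa using
      integrable_inv_ofReal_sub_pow_mul_ofReal_sub_pow hz.ne' hw.ne (a := 1) (b := 1) le_rfl
  rw [eq_div_iff hzw, mul_comm, ← integral_const_mul, integral_of_hasDerivAt_of_tendsto hderiv
    (hintegrable.const_mul _) (tendsto_log_ofReal_sub_sub_log_ofReal_sub_atBot hz hw)
    (tendsto_log_ofReal_sub_sub_log_ofReal_sub_atTop z w), zero_sub, neg_neg]

theorem integral_inv_ofReal_sub_pow_mul_ofReal_sub_pow (hz : 0 < z.im) (hw : w.im < 0) (a b : ℕ) :
    ∫ x : ℝ, (((x : ℂ) - z) ^ (a + 1) * ((x : ℂ) - w) ^ (b + 1))⁻¹ =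
      2 * Real.pi * I * (-1) ^ a * (a + b).choose a / (z - w) ^ (a + b + 1) := by
  have hzw : z ≠ w := fun h ↦ (hw.trans hz).ne' (congrArg im h)
  have hzw' : z - w ≠ 0 := sub_ne_zero.2 hzw
  have hrec {a b : ℕ} := integral_inv_ofReal_sub_pow_succ_mul_ofReal_sub_pow_succ
    hz.ne' hw.ne hzw (a := a) (b := b)
  induction a generalizing b with
  | zero =>
    induction b with
    | zero => simpa using integral_inv_ofReal_sub_mul_ofReal_sub hz hw
    | succ b ihb =>
      have hvanish := integral_inv_ofReal_sub_pow_eq_zero hw.ne (by lia : 2 ≤ b + 1 + 1)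
      rw [hrec (by lia), ihb]
      simp only [pow_zero, one_mul, hvanish, sub_zero, Nat.choose_zero_right]
      field_simp
      ring
  | succ a iha =>
    induction b with
    | zero =>
      have hvanish := integral_inv_ofReal_sub_pow_eq_zero hz.ne' (by lia : 2 ≤ a + 1 + 1)
      rw [hrec (by lia), iha]
      simp only [pow_zero, mul_one, hvanish, zero_sub, add_zero, Nat.choose_self]
      field_simp
      ring
    | succ b ihb =>
      have hpascal : (a + 1 + (b + 1)).choose (a + 1) =
          (a + (b + 1)).choose a + (a + 1 + b).choose (a + 1) := by
        rw [show a + (b + 1) = a + 1 + b by ring]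
        exact Nat.choose_succ_succ' (a + 1 + b) a
      rw [hrec (by lia), ihb, iha, hpascal]
      push_cast
      field_simp
      ring

end OppositeHalfPlanes

theorem stmt6 (m : ℕ) (hm : 1 ≤ m) :
    ∫ x : ℝ, 1 / (((x : ℂ) - I) ^ (m + 3) * ((x : ℂ) + I) ^ m) =
      -(2 * (Real.pi : ℂ) * I) * (4 : ℂ) ^ (-((m : ℤ) + 1)) *
        ((2 * m + 1).choose (m + 2) : ℂ) := by
  obtain ⟨k, rfl⟩ := Nat.exists_eq_add_of_le' hm
  have hformula := integral_inv_ofReal_sub_pow_mul_ofReal_sub_pow (z := I) (w := -I)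
    (by simp) (by simp) (k + 3) k
  have hpow : (I - -I) ^ (k + 3 + k + 1) = (-1) ^ (k + 2) * 4 ^ (k + 2) := by
    rw [show k + 3 + k + 1 = 2 * (k + 2) by ring, pow_mul, ← mul_pow]
    congr 1
    linear_combination 4 * I_sq
  have hzpow : (4 : ℂ) ^ (-(((k + 1 : ℕ) : ℤ) + 1)) = (4 ^ (k + 2))⁻¹ := by
    rw [zpow_neg]
    norm_cast
  simp only [sub_neg_eq_add, one_div] at hformula hpow ⊢
  rw [hformula, hpow, hzpow, show 2 * (k + 1) + 1 = k + 3 + k by ring]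
  field_simp
  ring
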